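/- Consider a control system Σ = (ℝ^n, U, 𝒰, f) with U ⊆ ℝ^m closed and convex, which is δ∃-ISS with a metric d whose sections x ↦ d(x,y) are continuous with respect to the Euclidean topology, with the max-form estimate d(ξ_{xυ}(t), ξ_{x'υ'}(t)) ≤ max{ β(d(x,x'),t), γ(‖υ−υ'‖_∞) } for a KL function β and a K∞ function γ. Set α(r) = β(r,0) and assume α(r) > r for all r > 0. Let ρ be a K∞ function satisfying ρ(r) ≤ (1/2)·γ⁻¹( α⁻¹(r)/4 ) for all r ≥ 0, let d̂ be the metric on ℝ^{2n} given by d̂((x₁,x₂),(x₁',x₂')) = d(x₁,x₁') + d(x₂,x₂'), and let Δ be the diagonal set. Let Σ̂ = (ℝ^{2n}, U × B₁(0), 𝒟, f̂) be the perturbed doubled system with f̂((ξ₁,ξ₂),(ω₁,ω₂)) = ( f(ξ₁, sat_U(ω₁ + ρ(d(ξ₁,ξ₂))·ω₂)), f(ξ₂, sat_U(ω₁ − ρ(d(ξ₁,ξ₂))·ω₂)) ). Then for every z ∈ ℝ^{2n}, every ω ∈ 𝒟, and every t ≥ 0, d̂(ζ_{zω}(t),Δ) ≤ max{ β(d̂(z,Δ),t),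 d̂(z,Δ)/2 }, where ζ_{zω} is the trajectory of Σ̂ from z under input ω. -/

import Mathlib

/-!
The distance of a state `(x₁,x₂)` of the doubled system to the diagonal is `d(x₁,x₂)`, so the claim
is that `D(t) = d(ζ₁(t),ζ₂(t))` satisfies `D(t) ≤ max{β(D(0),t), D(0)/2}`. The two components of `ζ`
are trajectories of the original system under the inputs `sat(ω₁ ± ρ(D) ω₂)`.

*Small gain.* Fix `q > 0` with `q ≥ D(0)`. While `D ≤ α(2q)` on `[0,t)`, the two inputs differ there
by at most `2ρ(α(2q)) ≤ γ⁻¹(q/2)`, because the metric projection `sat` is nonexpansive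
(`IsSat.norm_sub_le`) and `‖ω₂‖ ≤ 1`. After time `t` both inputs are replaced by a common constant,
which makes the bound global without changing the states at `t`. The incremental estimate then gives
`D(t) ≤ max{β(D(0),t), q/2}`, and this is below `α(2q)` since `α(2q) > 2q`. By continuity `D` has no
first time at which it reaches `α(2q)`, so the estimate holds for all times. Letting `q` decrease to
`D(0)` yields the claim.

*Existence for all times.* `IsTrajectory` is phrased with the Bochner integral, which is `0` for a
non-integrable integrand, so a function that blows up at a finite time and is frozen at its initial
value afterwards also satisfies it. The argument above needs genuine solutions (`SolvesOn`). They are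
supplied by `no_blowup`: if `ξ` blew up, the frozen curve would be a trajectory, and under the same
input every other trajectory `η` would approach `ξ(0)`; restarting at time `s`, it would also
approach `ξ(s)`. So `ξ` would be constant with right-hand side zero almost everywhere, hence
integrable, which contradicts the blow-up. Applied to both components this shows that `ζ` solves the
doubled system on every interval `[0,t]` (`solvesOn_doubled`), and applied to the original system it
lets solutions be extended beyond `t` (`exists_extension`).
-/

open MeasureTheory Set Filter

/-- `ℝ^n` with the Euclidean norm. -/
abbrev Euc (n : ℕ) := EuclideanSpace ℝ (Fin n)

/-- `d : E × E → [0,∞)` is a metric on `E`. -/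
def IsMetric {E : Type*} (d : E → E → ℝ) : Prop :=
  (∀ x y, 0 ≤ d x y) ∧ (∀ x y, d x y = 0 ↔ x = y) ∧
    (∀ x y, d x y = d y x) ∧ (∀ x y z, d x z ≤ d x y + d y z)

/-- The point-to-set distance `d(x,A) = inf_{y ∈ A} d(x,y)`. -/
noncomputable def setDist {E : Type*} (d : E → E → ℝ) (x : E) (A : Set E) : ℝ :=
  ⨅ y : A, d x (y : E)

/-- A class `K∞` function `[0,∞) → [0,∞)`: continuous, strictly increasing,
`γ(0) = 0` and `γ(r) → ∞` as `r → ∞`. -/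
def IsClassKInf (γ : ℝ → ℝ) : Prop :=
  ContinuousOn γ (Ici 0) ∧ γ 0 = 0 ∧ StrictMonoOn γ (Ici 0) ∧
    Tendsto γ atTop atTop

/-- A class `KL` function `[0,∞) × [0,∞) → [0,∞)`: continuous, `β(·,s)` of class `K∞`
for each fixed `s ≥ 0`, and for each fixed `r > 0`, `β(r,·)` decreasing to `0`. -/
def IsClassKL (β : ℝ → ℝ → ℝ) : Prop :=
  ContinuousOn (fun p : ℝ × ℝ => β p.1 p.2) (Ici 0 ×ˢ Ici 0) ∧
    (∀ s, 0 ≤ s → IsClassKInf fun r => β r s) ∧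
    (∀ r, 0 < r → AntitoneOn (β r) (Ici 0) ∧ Tendsto (β r) atTop (nhds 0))

/-- The metric `d̂` on `ℝ^{2n} = ℝ^n × ℝ^n` induced by a metric `d` on `ℝ^n`:
`d̂(z,z') = d(z₁,z₁') + d(z₂,z₂')`. -/
def dHat {E : Type*} (d : E → E → ℝ) (z z' : E × E) : ℝ :=
  d z.1 z'.1 + d z.2 z'.2

/-- The diagonal set `Δ = {(x,x) : x ∈ E} ⊆ E × E`. -/
def diagSet (E : Type*) : Set (E × E) := {z | ∃ x, z = (x, x)}

/-- Regularity assumptions on the right-hand side of a control system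
`Σ = (ℝ^n, U, 𝒰, f)`: `f` is continuous and Lipschitz in the state, uniformly in the
input, on every compact set of states. -/
def IsControlSystem {E I : Type*} [NormedAddCommGroup E] [NormedSpace ℝ E]
    [NormedAddCommGroup I] (f : E → I → E) (U : Set I) : Prop :=
  ContinuousOn (fun p : E × I => f p.1 p.2) (univ ×ˢ U) ∧
    ∀ Q : Set E, IsCompact Q → ∃ Z : ℝ, 0 < Z ∧
      ∀ x ∈ Q, ∀ y ∈ Q, ∀ u ∈ U, ‖f x u - f y u‖ ≤ Z * ‖x - y‖

/-- An admissible open-loop input: a measurable function with values in `U`. -/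
def AdmissibleInput {I : Type*} [MeasurableSpace I] (U : Set I) (υ : ℝ → I) : Prop :=
  Measurable υ ∧ ∀ t, υ t ∈ U

/-- `ξ` is a (forward-time) trajectory of `ẋ = f(x,υ(t))`, in Carathéodory
(integral) form, i.e. `ξ` is absolutely continuous and satisfies the ODE for
almost every `t ≥ 0`. -/
def IsTrajectory {E I : Type*} [NormedAddCommGroup E] [NormedSpace ℝ E]
    (f : E → I → E) (υ : ℝ → I) (ξ : ℝ → E) : Prop :=
  ∀ t : ℝ, 0 ≤ t → ξ t = ξ 0 + ∫ s in (0:ℝ)..t, f (ξ s) (υ s)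

/-- Forward completeness: from every initial state and admissible input there is a
trajectory defined on all of `[0,∞)`. -/
def ForwardComplete {E I : Type*} [NormedAddCommGroup E] [NormedSpace ℝ E]
    [MeasurableSpace I] (f : E → I → E) (U : Set I) : Prop :=
  ∀ υ, AdmissibleInput U υ → ∀ x : E, ∃ ξ, ξ 0 = x ∧ IsTrajectory f υ ξ

/-- The `δ∃-GAS` estimate with a given metric `d` and `KL` function `β`:
`d(ξ_{xυ}(t),ξ_{x'υ}(t)) ≤ β(d(x,x'),t)`. -/
def DeltaGASWith {E I : Type*} [NormedAddCommGroup E] [NormedSpace ℝ E]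
    [MeasurableSpace I] (f : E → I → E) (U : Set I)
    (d : E → E → ℝ) (β : ℝ → ℝ → ℝ) : Prop :=
  ∀ υ, AdmissibleInput U υ → ∀ ξ ξ', IsTrajectory f υ ξ → IsTrajectory f υ ξ' →
    ∀ t : ℝ, 0 ≤ t → d (ξ t) (ξ' t) ≤ β (d (ξ 0) (ξ' 0)) t

/-- The `U∃GAS` estimate w.r.t. a set `A`, with a given metric `d` and `KL` function `β`:
`d(ξ_{xυ}(t),A) ≤ β(d(x,A),t)`. -/
def UGASWith {E I : Type*} [NormedAddCommGroup E] [NormedSpace ℝ E]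
    [MeasurableSpace I] (f : E → I → E) (U : Set I) (A : Set E)
    (d : E → E → ℝ) (β : ℝ → ℝ → ℝ) : Prop :=
  ∀ υ, AdmissibleInput U υ → ∀ ξ, IsTrajectory f υ ξ →
    ∀ t : ℝ, 0 ≤ t → setDist d (ξ t) A ≤ β (setDist d (ξ 0) A) t

/-- `‖υ - υ'‖_∞`: the essential supremum of `‖υ(t) - υ'(t)‖` over `t ≥ 0`. -/
noncomputable def supDist {I : Type*} [NormedAddCommGroup I] (υ υ' : ℝ → I) : ENNReal :=
  essSup (fun t => (‖υ t - υ' t‖₊ : ENNReal)) (volume.restrict (Ici (0:ℝ)))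

/-- The `δ∃-ISS` estimate with metric `d`, `KL` function `β` and `K∞` function `γ`:
`d(ξ_{xυ}(t),ξ_{x'υ'}(t)) ≤ β(d(x,x'),t) + γ(‖υ-υ'‖_∞)` (for essentially bounded
input differences). -/
def DeltaISSWith {E I : Type*} [NormedAddCommGroup E] [NormedSpace ℝ E]
    [MeasurableSpace I] [NormedAddCommGroup I] (f : E → I → E) (U : Set I)
    (d : E → E → ℝ) (β : ℝ → ℝ → ℝ) (γ : ℝ → ℝ) : Prop :=
  ∀ υ υ', AdmissibleInput U υ → AdmissibleInput U υ' → supDist υ υ' ≠ ⊤ →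
    ∀ ξ ξ', IsTrajectory f υ ξ → IsTrajectory f υ' ξ' →
      ∀ t : ℝ, 0 ≤ t →
        d (ξ t) (ξ' t) ≤ β (d (ξ 0) (ξ' 0)) t + γ (supDist υ υ').toReal

/-- The max-form `δ∃-ISS` estimate:
`d(ξ_{xυ}(t),ξ_{x'υ'}(t)) ≤ max{β(d(x,x'),t), γ(‖υ-υ'‖_∞)}`. -/
def DeltaISSMaxWith {E I : Type*} [NormedAddCommGroup E] [NormedSpace ℝ E]
    [MeasurableSpace I] [NormedAddCommGroup I] (f : E → I → E) (U : Set I)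
    (d : E → E → ℝ) (β : ℝ → ℝ → ℝ) (γ : ℝ → ℝ) : Prop :=
  ∀ υ υ', AdmissibleInput U υ → AdmissibleInput U υ' → supDist υ υ' ≠ ⊤ →
    ∀ ξ ξ', IsTrajectory f υ ξ → IsTrajectory f υ' ξ' →
      ∀ t : ℝ, 0 ≤ t →
        d (ξ t) (ξ' t) ≤ max (β (d (ξ 0) (ξ' 0)) t) (γ (supDist υ υ').toReal)

/-- A `U∃GAS` Lyapunov function w.r.t. a set `A`, equipped with a metric `d`. -/
def IsUGASLyapunovWith {E I : Type*} [NormedAddCommGroup E] [NormedSpace ℝ E]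
    (f : E → I → E) (U : Set I) (A : Set E) (d : E → E → ℝ) (V : E → ℝ) : Prop :=
  ContDiff ℝ (⊤ : ℕ∞) V ∧ (∀ x, 0 ≤ V x) ∧
    ∃ α₁ α₂ : ℝ → ℝ, ∃ κ : ℝ, IsClassKInf α₁ ∧ IsClassKInf α₂ ∧ 0 < κ ∧
      (∀ x, α₁ (setDist d x A) ≤ V x ∧ V x ≤ α₂ (setDist d x A)) ∧
      ∀ x, ∀ u ∈ U, fderiv ℝ V x (f x u) ≤ -κ * V x

/-- A `δ∃-GAS` Lyapunov function, equipped with a metric `d`. -/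
def IsDeltaGASLyapunovWith {E I : Type*} [NormedAddCommGroup E] [NormedSpace ℝ E]
    (f : E → I → E) (U : Set I) (d : E → E → ℝ) (V : E × E → ℝ) : Prop :=
  ContDiff ℝ (⊤ : ℕ∞) V ∧ (∀ p, 0 ≤ V p) ∧
    ∃ α₁ α₂ : ℝ → ℝ, ∃ κ : ℝ, IsClassKInf α₁ ∧ IsClassKInf α₂ ∧ 0 < κ ∧
      (∀ x x', α₁ (d x x') ≤ V (x, x') ∧ V (x, x') ≤ α₂ (d x x')) ∧
      ∀ x x', ∀ u ∈ U, fderiv ℝ V (x, x') (f x u, f x' u) ≤ -κ * V (x, x')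

/-- A `δ∃-ISS` Lyapunov function, equipped with a metric `d`. -/
def IsDeltaISSLyapunovWith {E I : Type*} [NormedAddCommGroup E] [NormedSpace ℝ E]
    [NormedAddCommGroup I] (f : E → I → E) (U : Set I)
    (d : E → E → ℝ) (V : E × E → ℝ) : Prop :=
  ContDiff ℝ (⊤ : ℕ∞) V ∧ (∀ p, 0 ≤ V p) ∧
    ∃ α₁ α₂ σ : ℝ → ℝ, ∃ κ : ℝ, IsClassKInf α₁ ∧ IsClassKInf α₂ ∧ IsClassKInf σ ∧ 0 < κ ∧
      (∀ x x', α₁ (d x x') ≤ V (x, x') ∧ V (x, x') ≤ α₂ (d x x')) ∧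
      ∀ x x', ∀ u ∈ U, ∀ u' ∈ U,
        fderiv ℝ V (x, x') (f x u, f x' u') ≤ -κ * V (x, x') + σ ‖u - u'‖

/-- `sat` is the saturation (metric projection) map onto the closed convex set `U`:
`sat(u)` is the point of `U` closest to `u` (so `sat(u) = u` for `u ∈ U`). -/
def IsSat {I : Type*} [NormedAddCommGroup I] (U : Set I) (sat : I → I) : Prop :=
  ∀ u, sat u ∈ U ∧ ∀ u' ∈ U, ‖sat u - u‖ ≤ ‖u' - u‖

/-- `ω` is locally essentially bounded on `[0,∞)`. -/
def LocEssBounded {I : Type*} [NormedAddCommGroup I] (ω : ℝ → I) : Prop :=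
  ∀ T : ℝ, 0 < T → ∃ C : ℝ, ∀ᵐ t ∂(volume.restrict (Icc (0:ℝ) T)), ‖ω t‖ ≤ C

/-- An admissible disturbance input for the perturbed doubled system: a measurable,
locally essentially bounded function with values in `D`. -/
def AdmissibleDisturbance {I : Type*} [NormedAddCommGroup I] [MeasurableSpace I]
    (D : Set I) (ω : ℝ → I) : Prop :=
  Measurable ω ∧ (∀ t, ω t ∈ D) ∧ LocEssBounded ω

/-! ### Carathéodory solutions -/

section Solutions

variable {E I : Type*} [NormedAddCommGroup E] [NormedSpace ℝ E]

/-- `ξ` is a genuine Carathéodory solution of `ẋ = f(x, υ)` on `[0,T]`: the right-hand side is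
integrable along `ξ` on `[0,T]` and the integral equation holds there. -/
def SolvesOn (f : E → I → E) (υ : ℝ → I) (ξ : ℝ → E) (T : ℝ) : Prop :=
  IntervalIntegrable (fun s => f (ξ s) (υ s)) volume 0 T ∧
    ∀ t ∈ Icc 0 T, ξ t = ξ 0 + ∫ s in (0:ℝ)..t, f (ξ s) (υ s)

lemma IsTrajectory.solvesOn {f : E → I → E} {υ : ℝ → I} {ξ : ℝ → E} (h : IsTrajectory f υ ξ)
    {T : ℝ} (hi : IntervalIntegrable (fun s => f (ξ s) (υ s)) volume 0 T) :
    SolvesOn f υ ξ T :=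
  ⟨hi, fun t ht => h t ht.1⟩

lemma IsTrajectory.of_solvesOn {f : E → I → E} {υ : ℝ → I} {ξ : ℝ → E}
    (h : ∀ T, 0 ≤ T → SolvesOn f υ ξ T) : IsTrajectory f υ ξ :=
  fun t ht => (h t ht).2 t ⟨ht, le_rfl⟩

lemma intervalIntegrable_mono_right {F : Type*} [NormedAddCommGroup F] {g : ℝ → F} {T t : ℝ}
    (h : IntervalIntegrable g volume 0 T) (ht : 0 ≤ t) (htT : t ≤ T) :
    IntervalIntegrable g volume 0 t :=
  h.mono_set (by rw [uIcc_of_le ht, uIcc_of_le (ht.trans htT)]; exact Icc_subset_Icc_right htT)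

lemma SolvesOn.mono {f : E → I → E} {υ : ℝ → I} {ξ : ℝ → E} {T t : ℝ} (h : SolvesOn f υ ξ T)
    (ht : 0 ≤ t) (htT : t ≤ T) : SolvesOn f υ ξ t :=
  ⟨intervalIntegrable_mono_right h.1 ht htT, fun s hs => h.2 s ⟨hs.1, hs.2.trans htT⟩⟩

lemma SolvesOn.congr {f : E → I → E} {υ υ' : ℝ → I} {ξ ξ' : ℝ → E} {T : ℝ} (hT : 0 ≤ T)
    (h : SolvesOn f υ ξ T) (hξ : ∀ t ∈ Icc 0 T, ξ' t = ξ t) (hυ : ∀ t ∈ Ioo 0 T, υ' t = υ t) :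
    SolvesOn f υ' ξ' T := by
  have key : ∀ t ∈ Icc 0 T, EqOn (fun s => f (ξ s) (υ s)) (fun s => f (ξ' s) (υ' s)) (Ioo 0 t) := by
    intro t ht s hs
    have h2 : s < T := hs.2.trans_le ht.2
    simp only [hξ s ⟨hs.1.le, h2.le⟩, hυ s ⟨hs.1, h2⟩]
  refine ⟨h.1.congr_uIoo ?_, fun t ht => ?_⟩
  · rw [uIoo_of_le hT]; exact key T ⟨hT, le_rfl⟩
  · rw [hξ t ht, hξ 0 ⟨le_rfl, hT⟩, h.2 t ht,
      intervalIntegral.integral_congr_Ioo_of_le ht.1 (key t ht)]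

lemma SolvesOn.continuousOn {f : E → I → E} {υ : ℝ → I} {ξ : ℝ → E} {T : ℝ}
    (hT : 0 ≤ T) (h : SolvesOn f υ ξ T) : ContinuousOn ξ (Icc 0 T) := by
  have h1 := intervalIntegral.continuousOn_primitive_interval' h.1 left_mem_uIcc
  rw [uIcc_of_le hT] at h1
  exact (continuousOn_const.add h1).congr h.2

lemma SolvesOn.shift {f : E → I → E} {υ : ℝ → I} {ξ : ℝ → E} {T s : ℝ} (h : SolvesOn f υ ξ T)
    (hs : 0 ≤ s) (hsT : s ≤ T) :
    SolvesOn f (fun t => υ (s + t)) (fun t => ξ (s + t)) (T - s) := by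
  have hi : ∀ a ∈ Icc 0 T, ∀ b ∈ Icc 0 T,
      IntervalIntegrable (fun s => f (ξ s) (υ s)) volume a b := fun a ha b hb =>
    (intervalIntegrable_mono_right h.1 ha.1 ha.2).symm.trans
      (intervalIntegrable_mono_right h.1 hb.1 hb.2)
  refine ⟨?_, fun t ht => ?_⟩
  · have := (hi s ⟨hs, hsT⟩ T ⟨hs.trans hsT, le_rfl⟩).comp_add_left s
    simpa using this
  · have hst : s + t ∈ Icc 0 T := ⟨by linarith [ht.1], by linarith [ht.2]⟩
    have h0 : (0:ℝ) ∈ Icc 0 T := ⟨le_rfl, hs.trans hsT⟩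
    beta_reduce
    rw [h.2 _ hst, intervalIntegral.integral_comp_add_left (fun r => f (ξ r) (υ r)) s, add_zero,
      h.2 s ⟨hs, hsT⟩, add_assoc, intervalIntegral.integral_add_adjacent_intervals
        (hi 0 h0 s ⟨hs, hsT⟩) (hi s ⟨hs, hsT⟩ _ hst)]

lemma SolvesOn.concat {f : E → I → E} {υ : ℝ → I} {ξ η : ℝ → E} {T S : ℝ} (hT : 0 ≤ T)
    (hS : 0 ≤ S) (h : SolvesOn f υ ξ T) (h' : SolvesOn f (fun t => υ (T + t)) η S)
    (h0 : η 0 = ξ T) :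
    SolvesOn f υ (fun t => if t ≤ T then ξ t else η (t - T)) (T + S) := by
  set c : ℝ → E := fun t => if t ≤ T then ξ t else η (t - T) with hc
  have hc1 : SolvesOn f υ c T := h.congr hT (fun t ht => by simp [hc, ht.2]) (fun _ _ => rfl)
  have hc2 : SolvesOn f (fun t => υ (T + t)) (fun t => c (T + t)) S := by
    refine h'.congr hS (fun t ht => ?_) (fun _ _ => rfl)
    rcases ht.1.eq_or_lt with h1 | h1
    · simp [hc, ← h1, h0]
    · simp [hc, h1]
  have hi2 : ∀ t ∈ Icc 0 S, IntervalIntegrable (fun s => f (c s) (υ s)) volume T (T + t) := by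
    intro t ht
    have := (intervalIntegrable_mono_right hc2.1 ht.1 ht.2).comp_sub_right T
    simpa [add_comm] using this
  refine ⟨hc1.1.trans (hi2 S ⟨hS, le_rfl⟩), fun t ht => ?_⟩
  rcases le_total t T with htT | htT
  · exact hc1.2 t ⟨ht.1, htT⟩
  · have h3 := hc2.2 (t - T) ⟨by linarith, by linarith [ht.2]⟩
    have h4 := hi2 (t - T) ⟨by linarith, by linarith [ht.2]⟩
    rw [intervalIntegral.integral_comp_add_left (fun r => f (c r) (υ r)) T] at h3
    simp only [add_sub_cancel, add_zero] at h3 h4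
    rw [h3, hc1.2 T ⟨hT, le_rfl⟩, add_assoc,
      intervalIntegral.integral_add_adjacent_intervals hc1.1 h4]

/-- A solution whose right-hand side fails to be integrable at time `T`, frozen at its initial value
from time `T` on, is an `IsTrajectory`: past `T` the integral takes the default value `0`. -/
lemma isTrajectory_of_blowup {f : E → I → E} {υ : ℝ → I} {ξ : ℝ → E} {T : ℝ} (hT : 0 < T)
    (h : ∀ t, 0 ≤ t → t < T → SolvesOn f υ ξ t)
    (hn : ¬ IntervalIntegrable (fun s => f (ξ s) (υ s)) volume 0 T) :
    IsTrajectory f υ (fun t => if t < T then ξ t else ξ 0) := by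
  intro t ht
  by_cases htT : t < T
  · have h1 : SolvesOn f υ (fun t => if t < T then ξ t else ξ 0) t :=
      (h t ht htT).congr ht (fun s hs => by simp [hs.2.trans_lt htT]) (fun _ _ => rfl)
    exact h1.2 t ⟨ht, le_rfl⟩
  · rw [intervalIntegral.integral_undef]
    · simp [htT, hT]
    · intro h2
      refine hn ((intervalIntegrable_mono_right h2 hT.le (not_lt.mp htT)).congr_uIoo ?_)
      rw [uIoo_of_le hT.le]
      intro s hs
      simp [hs.2]

/-- A trajectory whose right-hand side is integrable along the constant state `ζ 0` is either a
genuine solution for all times, or ceases to be one at a blow-up time `T`. -/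
lemma IsTrajectory.dichotomy {f : E → I → E} {υ : ℝ → I} {ζ : ℝ → E} (h : IsTrajectory f υ ζ)
    (h0 : ∀ a b, 0 ≤ a → a ≤ b → IntervalIntegrable (fun s => f (ζ 0) (υ s)) volume a b) :
    (∀ t, 0 ≤ t → SolvesOn f υ ζ t) ∨
      ∃ T, 0 < T ∧ (∀ t, 0 ≤ t → t < T → SolvesOn f υ ζ t) ∧
        ¬ IntervalIntegrable (fun s => f (ζ s) (υ s)) volume 0 T := by
  by_cases hall : ∀ t, 0 ≤ t → SolvesOn f υ ζ t
  · exact Or.inl hall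
  push Not at hall
  obtain ⟨t0, ht0, hn0⟩ := hall
  right
  set J : Set ℝ := {t | 0 ≤ t ∧ IntervalIntegrable (fun s => f (ζ s) (υ s)) volume 0 t} with hJ
  have h0J : (0:ℝ) ∈ J := ⟨le_rfl, IntervalIntegrable.refl⟩
  have hbd : BddAbove J := by
    refine ⟨t0, fun t ht => ?_⟩
    by_contra hlt
    exact hn0 (h.solvesOn (intervalIntegrable_mono_right ht.2 ht0 (not_le.mp hlt).le))
  have hT0 : 0 ≤ sSup J := le_csSup hbd h0J
  have hTn : sSup J ∉ J := by
    intro hTJ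
    -- past the supremum the trajectory is frozen at `ζ 0`, so integrability persists
    have hfr : IntervalIntegrable (fun s => f (ζ s) (υ s)) volume (sSup J) (sSup J + 1) := by
      refine (h0 (sSup J) (sSup J + 1) hT0 (by linarith)).congr_uIoo ?_
      rw [uIoo_of_le (by linarith)]
      intro s hs
      have hsn : ¬ IntervalIntegrable (fun s => f (ζ s) (υ s)) volume 0 s := fun hs' =>
        (le_csSup hbd (show s ∈ J from ⟨hT0.trans hs.1.le, hs'⟩)).not_gt hs.1
      have hz : ζ s = ζ 0 := by
        rw [h s (hT0.trans hs.1.le), intervalIntegral.integral_undef hsn, add_zero]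
      simp only [hz]
    have : sSup J + 1 ∈ J := ⟨by linarith, hTJ.2.trans hfr⟩
    linarith [le_csSup hbd this]
  have hTpos : 0 < sSup J := lt_of_le_of_ne hT0 (fun h' => hTn (h' ▸ h0J))
  refine ⟨sSup J, hTpos, fun t ht htT => ?_, fun h' => hTn ⟨hT0, h'⟩⟩
  obtain ⟨t', ht', htt'⟩ := exists_lt_of_lt_csSup ⟨0, h0J⟩ htT
  exact h.solvesOn (intervalIntegrable_mono_right ht'.2 ht htt'.le)

/-- If `∫₀ᵗ g = 0` for all `t ∈ [0,T)`, then `g` vanishes almost everywhere on `[0,T]` by Lebesgue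
differentiation, so it is integrable up to the endpoint `T`. -/
lemma intervalIntegrable_of_integral_eq_zero [CompleteSpace E] {g : ℝ → E} {T : ℝ} (hT : 0 < T)
    (hi : ∀ t, 0 ≤ t → t < T → IntervalIntegrable g volume 0 t)
    (h0 : ∀ t, 0 ≤ t → t < T → ∫ s in (0:ℝ)..t, g s = 0) :
    IntervalIntegrable g volume 0 T := by
  obtain ⟨u, -, hu, hlim⟩ := exists_seq_strictMono_tendsto' hT
  have hae : ∀ᵐ x : ℝ, ∀ k, x ∈ uIcc 0 (u k) → ∀ c ∈ uIcc 0 (u k),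
      HasDerivAt (fun x => ∫ t in c..x, g t) (g x) x :=
    ae_all_iff.mpr fun k => (hi (u k) (hu k).1.le (hu k).2).ae_hasDerivAt_integral
  have hne : ∀ᵐ x : ℝ, x ≠ T := by simp [ae_iff, measure_singleton]
  have hz : ∀ᵐ x : ℝ, x ∈ Ioc 0 T → g x = 0 := by
    filter_upwards [hae, hne] with x hx hxT hxm
    have hxlt : x < T := lt_of_le_of_ne hxm.2 hxT
    obtain ⟨k, hk⟩ := (hlim.eventually (lt_mem_nhds hxlt)).exists
    have hd := hx k (by rw [uIcc_of_le (hu k).1.le]; exact ⟨hxm.1.le, hk.le⟩) 0 left_mem_uIcc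
    refine hd.unique ((hasDerivAt_const x (0:E)).congr_of_eventuallyEq ?_)
    filter_upwards [Ioo_mem_nhds hxm.1 hxlt] with y hy
    exact h0 y hy.1.le hy.2
  have hzero : IntervalIntegrable (fun _ : ℝ => (0:E)) volume 0 T := by simp
  refine hzero.congr_ae ?_
  rw [uIoc_of_le hT.le]
  exact (ae_restrict_iff' measurableSet_Ioc).mpr (hz.mono fun x hx hm => (hx hm).symm)

end Solutions

/-! ### Incremental stability excludes blow-up -/

section Incremental

variable {E I : Type*} [NormedAddCommGroup E] [NormedSpace ℝ E]
  [NormedAddCommGroup I] [MeasurableSpace I]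

lemma IsClassKL.zero {β : ℝ → ℝ → ℝ} (hβ : IsClassKL β) {s : ℝ} (hs : 0 ≤ s) : β 0 s = 0 :=
  (hβ.2.1 s hs).2.1

lemma IsClassKL.nonneg {β : ℝ → ℝ → ℝ} (hβ : IsClassKL β) {r s : ℝ} (hr : 0 ≤ r) (hs : 0 ≤ s) :
    0 ≤ β r s := by
  have h := hβ.2.1 s hs
  simpa [h.2.1] using h.2.2.1.monotoneOn (mem_Ici.mpr le_rfl) (mem_Ici.mpr hr) hr

lemma IsClassKL.mono_left {β : ℝ → ℝ → ℝ} (hβ : IsClassKL β) {r r' s : ℝ} (hr : 0 ≤ r)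
    (hrr' : r ≤ r') (hs : 0 ≤ s) : β r s ≤ β r' s :=
  (hβ.2.1 s hs).2.2.1.monotoneOn (mem_Ici.mpr hr) (mem_Ici.mpr (hr.trans hrr')) hrr'

lemma IsClassKL.le_zero_time {β : ℝ → ℝ → ℝ} (hβ : IsClassKL β) {r s : ℝ} (hr : 0 ≤ r)
    (hs : 0 ≤ s) : β r s ≤ β r 0 := by
  rcases hr.eq_or_lt with h | h
  · rw [← h, hβ.zero hs, hβ.zero le_rfl]
  · exact (hβ.2.2 r h).1 (mem_Ici.mpr le_rfl) (mem_Ici.mpr hs) hs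

lemma IsClassKL.tendsto {β : ℝ → ℝ → ℝ} (hβ : IsClassKL β) {r : ℝ} (hr : 0 ≤ r) :
    Tendsto (β r) atTop (nhds 0) := by
  rcases hr.eq_or_lt with h | h
  · refine tendsto_const_nhds.congr' ?_
    filter_upwards [eventually_ge_atTop 0] with s hs
    rw [← h, hβ.zero hs]
  · exact (hβ.2.2 r h).2

/-- Under a common input the gain term of the incremental estimate disappears. -/
lemma DeltaISSMaxWith.same_input {f : E → I → E} {U : Set I} {d : E → E → ℝ} {β : ℝ → ℝ → ℝ}
    {γ : ℝ → ℝ} (hd : IsMetric d) (hβ : IsClassKL β) (hγ : IsClassKInf γ)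
    (hiss : DeltaISSMaxWith f U d β γ) {υ : ℝ → I} (hυ : AdmissibleInput U υ) {ξ ξ' : ℝ → E}
    (hξ : IsTrajectory f υ ξ) (hξ' : IsTrajectory f υ ξ') {t : ℝ} (ht : 0 ≤ t) :
    d (ξ t) (ξ' t) ≤ β (d (ξ 0) (ξ' 0)) t := by
  have h0 : supDist υ υ = 0 :=
    le_antisymm (essSup_le_of_ae_le 0 (Eventually.of_forall fun t => by simp)) zero_le
  have h := hiss υ υ hυ hυ (by simp [h0]) ξ ξ' hξ hξ' t ht
  simpa [h0, hγ.2.1, hβ.nonneg (hd.1 _ _) ht] using h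

/-- No solution of a system with the incremental estimate blows up in finite time. If `ξ` did, then
freezing it at `ξ 0` after the blow-up time would give a trajectory, so that the trajectory `η` from
another initial state under the same input would satisfy `η(t) → ξ 0` in `d`. The same reasoning
started at time `s` gives `η(t) → ξ s`. Hence `ξ` is constant, and does not blow up after all. -/
lemma no_blowup [CompleteSpace E]
    {f : E → I → E} {U : Set I} {d : E → E → ℝ} {β : ℝ → ℝ → ℝ}
    {γ : ℝ → ℝ} (hd : IsMetric d) (hβ : IsClassKL β) (hγ : IsClassKInf γ)
    (hfc : ForwardComplete f U) (hiss : DeltaISSMaxWith f U d β γ) {υ : ℝ → I}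
    (hυ : AdmissibleInput U υ) {ξ : ℝ → E} {T : ℝ} (hT : 0 < T)
    (hsol : ∀ t, 0 ≤ t → t < T → SolvesOn f υ ξ t) :
    IntervalIntegrable (fun s => f (ξ s) (υ s)) volume 0 T := by
  by_contra hn
  obtain ⟨d0, dz, dsymm, dtri⟩ := hd
  have hd : IsMetric d := ⟨d0, dz, dsymm, dtri⟩
  have hsub : Nontrivial E := by
    by_contra hE
    rw [not_nontrivial_iff_subsingleton] at hE
    apply hn
    have : (fun s => f (ξ s) (υ s)) = fun _ => (0:E) := funext fun s => Subsingleton.elim _ _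
    rw [this]; simp
  obtain ⟨x', hx'⟩ := exists_ne (ξ 0)
  obtain ⟨η, hη0, hη⟩ := hfc υ hυ x'
  have key : ∀ t, T ≤ t → d (η t) (ξ 0) ≤ β (d (η 0) (ξ 0)) t := by
    intro t ht
    have := hiss.same_input hd hβ hγ hυ hη (isTrajectory_of_blowup hT hsol hn)
      (hT.le.trans ht)
    simpa [hT, not_lt.mpr ht] using this
  have hηsol : ∀ t, 0 ≤ t → SolvesOn f υ η t := by
    intro t1 ht1
    by_contra hc
    have hni : ∀ t, t1 ≤ t → η t = η 0 := fun t ht => by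
      rw [hη t (ht1.trans ht), intervalIntegral.integral_undef, add_zero]
      exact fun h => hc (hη.solvesOn (intervalIntegrable_mono_right h ht1 ht))
    have hle : d (η 0) (ξ 0) ≤ 0 := by
      refine ge_of_tendsto (hβ.tendsto (d0 (η 0) (ξ 0))) ?_
      filter_upwards [eventually_ge_atTop T, eventually_ge_atTop t1] with t h1 h2
      have := key t h1
      rwa [hni t h2] at this
    exact hx' (hη0 ▸ (dz _ _).1 (le_antisymm hle (d0 _ _)))
  have hconst : ∀ s, 0 ≤ s → s < T → ξ s = ξ 0 := by
    intro s hs hsT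
    have hυs : AdmissibleInput U (fun t => υ (s + t)) :=
      ⟨hυ.1.comp (measurable_const.add measurable_id), fun t => hυ.2 _⟩
    have hξs : IsTrajectory f (fun t => υ (s + t))
        (fun t => if t < T - s then ξ (s + t) else ξ (s + 0)) := by
      refine isTrajectory_of_blowup (ξ := fun t => ξ (s + t)) (by linarith) (fun t ht htT => ?_) ?_
      · simpa using (hsol (s + t) (by linarith) (by linarith)).shift hs (by linarith)
      · intro h
        have h2 := h.comp_sub_right s
        simp only [zero_add, sub_add_cancel, add_sub_cancel] at h2
        exact hn ((hsol s hs hsT).1.trans h2)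
    have hηs : IsTrajectory f (fun t => υ (s + t)) (fun t => η (s + t)) :=
      .of_solvesOn fun t ht => by
        simpa using (hηsol (s + t) (by linarith)).shift hs (by linarith)
    have hlim : Tendsto (fun t => β (d (η (s + 0)) (ξ (s + 0))) t
        + β (d (η 0) (ξ 0)) (s + t)) atTop (nhds (0 + 0)) :=
      (hβ.tendsto (d0 _ _)).add
        ((hβ.tendsto (d0 _ _)).comp (tendsto_atTop_add_const_left _ s tendsto_id))
    have hle : d (ξ s) (ξ 0) ≤ 0 := by
      rw [add_zero (0:ℝ)] at hlim
      refine ge_of_tendsto hlim ?_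
      filter_upwards [eventually_ge_atTop T] with t ht
      have h1 := hiss.same_input hd hβ hγ hυs hηs hξs (hT.le.trans ht)
      have h2 := key (s + t) (by linarith)
      have h3 : ¬ t < T - s := by linarith
      simp only [h3, if_false, show (0:ℝ) < T - s by linarith, if_true] at h1
      have h4 := dtri (ξ s) (η (s + t)) (ξ 0)
      rw [dsymm (ξ s) (η (s + t))] at h4
      simp only [add_zero] at h1 ⊢
      linarith
    exact (dz _ _).1 (le_antisymm hle (d0 _ _))
  refine hn (intervalIntegrable_of_integral_eq_zero hT (fun t h1 h2 => (hsol t h1 h2).1) ?_)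
  intro t h1 h2
  have := (hsol t h1 h2).2 t ⟨h1, le_rfl⟩
  rw [hconst t h1 h2] at this
  simpa using this

/-- A solution on `[0,T]` extends to a trajectory defined for all times, provided the input is
constant from `T` on. -/
lemma exists_extension [CompleteSpace E] {f : E → I → E} {U : Set I} {d : E → E → ℝ}
    {β : ℝ → ℝ → ℝ} {γ : ℝ → ℝ} (hd : IsMetric d) (hβ : IsClassKL β) (hγ : IsClassKInf γ)
    (hfc : ForwardComplete f U) (hiss : DeltaISSMaxWith f U d β γ) {υ : ℝ → I} {u : I} (hu : u ∈ U)
    {ξ : ℝ → E} {T : ℝ} (hT : 0 ≤ T) (hυT : ∀ t, T ≤ t → υ t = u) (hsol : SolvesOn f υ ξ T) :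
    ∃ c, IsTrajectory f υ c ∧ ∀ t, t ≤ T → c t = ξ t := by
  have hconst : AdmissibleInput U (fun _ : ℝ => u) := ⟨measurable_const, fun _ => hu⟩
  obtain ⟨η, hη0, hη⟩ := hfc _ hconst (ξ T)
  have hηsol : ∀ t, 0 ≤ t → SolvesOn f (fun _ => u) η t := by
    rcases hη.dichotomy (fun a b _ _ => intervalIntegrable_const) with h | ⟨S, hS, h1, h2⟩
    · exact h
    · exact absurd (no_blowup hd hβ hγ hfc hiss hconst hS h1) h2
  refine ⟨fun t => if t ≤ T then ξ t else η (t - T), .of_solvesOn fun t ht => ?_,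
    fun t ht => by simp [ht]⟩
  have h1 : SolvesOn f (fun s => υ (T + s)) η t :=
    (hηsol t ht).congr ht (fun _ _ => rfl) (fun s hs => hυT _ (by linarith [hs.1]))
  exact (hsol.concat hT ht h1 hη0).mono ht (by linarith)

end Incremental

/-! ### The perturbed inputs and the doubled system -/

section Perturbation

lemma SolvesOn.fst {E I J : Type*} [NormedAddCommGroup E] [NormedSpace ℝ E] [CompleteSpace E]
    {f : E → I → E} {ω : ℝ → J} {ζ : ℝ → E × E} {G : E × E → J → I} {H : E × E → J → E} {T : ℝ}
    (h : SolvesOn (fun z w => (f z.1 (G z w), H z w)) ω ζ T) :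
    SolvesOn f (fun s => G (ζ s) (ω s)) (fun s => (ζ s).1) T := by
  refine ⟨⟨h.1.1.fst, h.1.2.fst⟩, fun t ht => ?_⟩
  have h1 := congrArg Prod.fst (h.2 t ht)
  rw [Prod.fst_add] at h1
  beta_reduce
  rw [h1]
  congr 1
  exact ((ContinuousLinearMap.fst ℝ E E).intervalIntegral_comp_comm
    (intervalIntegrable_mono_right h.1 ht.1 ht.2)).symm

lemma SolvesOn.snd {E I J : Type*} [NormedAddCommGroup E] [NormedSpace ℝ E] [CompleteSpace E]
    {f : E → I → E} {ω : ℝ → J} {ζ : ℝ → E × E} {G : E × E → J → I} {H : E × E → J → E} {T : ℝ}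
    (h : SolvesOn (fun z w => (H z w, f z.2 (G z w))) ω ζ T) :
    SolvesOn f (fun s => G (ζ s) (ω s)) (fun s => (ζ s).2) T := by
  refine ⟨⟨h.1.1.snd, h.1.2.snd⟩, fun t ht => ?_⟩
  have h1 := congrArg Prod.snd (h.2 t ht)
  rw [Prod.snd_add] at h1
  beta_reduce
  rw [h1]
  congr 1
  exact ((ContinuousLinearMap.snd ℝ E E).intervalIntegral_comp_comm
    (intervalIntegrable_mono_right h.1 ht.1 ht.2)).symm

/-- The distance of `z` to the diagonal in `d̂` is `d(z₁,z₂)`; it is attained at `(z₁,z₁)`. -/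
lemma setDist_dHat_diagSet {E : Type*} {d : E → E → ℝ} (hd : IsMetric d) (z : E × E) :
    setDist (dHat d) z (diagSet E) = d z.1 z.2 := by
  obtain ⟨d0, dz, dsymm, dtri⟩ := hd
  have hbd : BddBelow (range fun y : diagSet E => dHat d z (y : E × E)) :=
    ⟨0, by rintro _ ⟨y, rfl⟩; exact add_nonneg (d0 _ _) (d0 _ _)⟩
  refine le_antisymm ?_ ?_
  · refine (ciInf_le hbd ⟨(z.1, z.1), z.1, rfl⟩).trans ?_
    simp [dHat, (dz z.1 z.1).2 rfl, dsymm z.2 z.1]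
  · have : Nonempty (diagSet E) := ⟨⟨(z.1, z.1), z.1, rfl⟩⟩
    refine le_ciInf ?_
    rintro ⟨_, x, rfl⟩
    simpa [dHat, dsymm z.2 x] using dtri z.1 x z.2

lemma IsMetric.continuous_uncurry {E : Type*} [TopologicalSpace E] {d : E → E → ℝ}
    (hd : IsMetric d) (hsec : ∀ y, Continuous fun x => d x y) :
    Continuous fun p : E × E => d p.1 p.2 := by
  obtain ⟨d0, dz, dsymm, dtri⟩ := hd
  refine continuous_iff_continuousAt.mpr fun p => ?_
  refine tendsto_iff_dist_tendsto_zero.mpr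
    (squeeze_zero (g := fun q : E × E => d q.1 p.1 + d q.2 p.2) (fun _ => dist_nonneg) ?_ ?_)
  · intro q
    rw [Real.dist_eq, abs_le]
    have h1 := dtri p.1 q.1 p.2
    have h2 := dtri q.1 q.2 p.2
    have h3 := dtri q.1 p.1 q.2
    have h4 := dtri p.1 p.2 q.2
    have h5 := dsymm p.1 q.1
    have h6 := dsymm p.2 q.2
    constructor <;> linarith
  · have hc : Continuous fun q : E × E => d q.1 p.1 + d q.2 p.2 :=
      ((hsec p.1).comp continuous_fst).add ((hsec p.2).comp continuous_snd)
    simpa [(dz p.1 p.1).2 rfl, (dz p.2 p.2).2 rfl] using hc.tendsto p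

/-- The metric projection onto a convex set is nonexpansive. -/
lemma IsSat.norm_sub_le {I : Type*} [NormedAddCommGroup I] [InnerProductSpace ℝ I] {U : Set I}
    (hU : Convex ℝ U) {sat : I → I} (hsat : IsSat U sat) (u v : I) :
    ‖sat u - sat v‖ ≤ ‖u - v‖ := by
  have hvar : ∀ u : I, ∀ w ∈ U, inner ℝ (u - sat u) (w - sat u) ≤ 0 := by
    intro u
    refine (norm_eq_iInf_iff_real_inner_le_zero hU (hsat u).1).1 (le_antisymm ?_ ?_)
    · have : Nonempty U := ⟨⟨_, (hsat u).1⟩⟩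
      refine le_ciInf fun w => ?_
      rw [norm_sub_rev u, norm_sub_rev u]
      exact (hsat u).2 w w.2
    · exact ciInf_le ⟨0, by rintro _ ⟨w, rfl⟩; exact norm_nonneg _⟩ (⟨_, (hsat u).1⟩ : U)
  have h1 := hvar u _ (hsat v).1
  have h2 := hvar v _ (hsat u).1
  have h3 : ‖sat u - sat v‖ ^ 2 ≤ inner ℝ (u - v) (sat u - sat v) := by
    rw [← real_inner_self_eq_norm_sq]
    have e1 : inner ℝ (u - sat u) (sat v - sat u) = - inner ℝ (u - sat u) (sat u - sat v) := by
      rw [← inner_neg_right, neg_sub]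
    have e2 : inner ℝ (u - v) (sat u - sat v) = inner ℝ (u - sat u) (sat u - sat v)
        - inner ℝ (v - sat v) (sat u - sat v) + inner ℝ (sat u - sat v) (sat u - sat v) := by
      rw [← inner_sub_left, ← inner_add_left]
      congr 1
      abel
    linarith
  have h4 := h3.trans (real_inner_le_norm _ _)
  by_contra hlt
  push Not at hlt
  nlinarith [norm_nonneg (u - v)]

lemma IsSat.continuous {I : Type*} [NormedAddCommGroup I] [InnerProductSpace ℝ I] {U : Set I}
    (hU : Convex ℝ U) {sat : I → I} (hsat : IsSat U sat) : Continuous sat :=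
  (LipschitzWith.of_dist_le_mul (K := 1) fun u v => by
    simpa [dist_eq_norm] using hsat.norm_sub_le hU u v).continuous

/-- With the state frozen, a saturated locally bounded input gives an integrable right-hand side. -/
lemma intervalIntegrable_const_state {n m : ℕ} {f : Euc n → Euc m → Euc n} {U : Set (Euc m)}
    (hsys : IsControlSystem f U) (hUcl : IsClosed U) (hU : Convex ℝ U) {sat : Euc m → Euc m}
    (hsat : IsSat U sat) (x : Euc n) {v : ℝ → Euc m} (hv : Measurable v) {a b C : ℝ}
    (ha : 0 ≤ a) (hab : a ≤ b) (hC : ∀ᵐ t ∂(volume.restrict (Icc (0:ℝ) b)), ‖v t‖ ≤ C) :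
    IntervalIntegrable (fun s => f x (sat (v s))) volume a b := by
  have hfx : ContinuousOn (f x) U :=
    hsys.1.comp (f := fun u => (x, u)) (by fun_prop) (fun u hu => ⟨mem_univ _, hu⟩)
  obtain ⟨B, hB⟩ := ((isCompact_closedBall (0 : Euc m) (‖sat 0‖ + C)).inter_right
    hUcl).exists_bound_of_continuousOn (hfx.mono inter_subset_right)
  have hmeas : Measurable fun s => f x (sat (v s)) := by
    classical
    have h1 : Measurable (U.piecewise (f x) 0) :=
      ContinuousOn.measurable_piecewise hfx continuous_zero.continuousOn hUcl.measurableSet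
    have h2 := h1.comp ((hsat.continuous hU).measurable.comp hv)
    have e : (fun s => f x (sat (v s))) = U.piecewise (f x) 0 ∘ (sat ∘ v) := by
      funext s
      simp [(hsat (v s)).1]
    rw [e]
    exact h2
  rw [intervalIntegrable_iff_integrableOn_Ioc_of_le hab]
  refine Measure.integrableOn_of_bounded (M := B) (by simp) hmeas.aestronglyMeasurable ?_
  have hss : Ioc a b ⊆ Icc 0 b := fun s hs => ⟨ha.trans hs.1.le, hs.2⟩
  refine Eventually.mono (ae_mono (Measure.restrict_mono hss le_rfl) hC) ?_
  intro s hs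
  refine hB _ ⟨?_, (hsat _).1⟩
  have h3 := hsat.norm_sub_le hU (v s) 0
  have h4 := norm_le_norm_add_norm_sub' (sat (v s)) (sat 0)
  rw [sub_zero] at h3
  simp only [mem_closedBall_zero_iff]
  linarith

/-- The input `sat(ω₁ + σ ρ(d(ζ₁,ζ₂)) ω₂)` that a component of the doubled system receives along `ζ`
during the time set `A`, and the constant `u₀` outside `A`; the components have `σ = ±1`. -/
noncomputable def pertInput {E I : Type*} [AddCommGroup I] [Module ℝ I] (sat : I → I) (ρ : ℝ → ℝ)
    (d : E → E → ℝ) (ω : ℝ → I × I) (ζ : ℝ → E × E) (A : Set ℝ) (u₀ : I) (σ : ℝ) : ℝ → I :=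
  open Classical in
  fun s => if s ∈ A then sat ((ω s).1 + (σ * ρ (d (ζ s).1 (ζ s).2)) • (ω s).2) else u₀

lemma admissible_pertInput {n m : ℕ} {U : Set (Euc m)} (hU : Convex ℝ U) {sat : Euc m → Euc m}
    (hsat : IsSat U sat) {ρ : ℝ → ℝ} (hρ : ContinuousOn ρ (Ici 0)) {d : Euc n → Euc n → ℝ}
    (hd : IsMetric d) (hsec : ∀ y : Euc n, Continuous fun x => d x y) {ω : ℝ → Euc m × Euc m}
    (hω : Measurable ω) {ζ : ℝ → Euc n × Euc n} {A : Set ℝ} (hA : MeasurableSet A)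
    (hζ : ContinuousOn ζ A) {u₀ : Euc m} (hu : u₀ ∈ U) (σ : ℝ) :
    AdmissibleInput U (pertInput sat ρ d ω ζ A u₀ σ) := by
  classical
  constructor
  · have h1 : ContinuousOn (fun s => ρ (d (ζ s).1 (ζ s).2)) A :=
      hρ.comp ((hd.continuous_uncurry hsec).comp_continuousOn hζ) (fun s _ => hd.1 _ _)
    have h2 : Measurable (A.piecewise (fun s => ρ (d (ζ s).1 (ζ s).2)) 0) :=
      h1.measurable_piecewise continuous_zero.continuousOn hA
    have h3 : Measurable fun s => sat ((ω s).1 +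
        (σ * (A.piecewise (fun s => ρ (d (ζ s).1 (ζ s).2)) 0) s) • (ω s).2) :=
      (hsat.continuous hU).measurable.comp (hω.fst.add ((h2.const_mul σ).smul hω.snd))
    have e : pertInput sat ρ d ω ζ A u₀ σ = fun s => if s ∈ A then sat ((ω s).1 +
        (σ * (A.piecewise (fun s => ρ (d (ζ s).1 (ζ s).2)) 0) s) • (ω s).2) else u₀ := by
      funext s
      by_cases hs : s ∈ A <;> simp [pertInput, hs]
    rw [e]
    exact h3.ite hA measurable_const
  · intro s
    unfold pertInput
    split_ifs
    exacts [(hsat _).1, hu]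

lemma norm_pertInput_sub_le {E I : Type*} [NormedAddCommGroup I] [InnerProductSpace ℝ I]
    {U : Set I} (hU : Convex ℝ U) {sat : I → I} (hsat : IsSat U sat) {ρ : ℝ → ℝ}
    {d : E → E → ℝ} {ω : ℝ → I × I} {ζ : ℝ → E × E} {A : Set ℝ} {u₀ : I} {C : ℝ} (hC : 0 ≤ C)
    (hω : ∀ s, ‖(ω s).2‖ ≤ 1) (hρ0 : ∀ s, 0 ≤ ρ (d (ζ s).1 (ζ s).2))
    (hρC : ∀ s ∈ A, 2 * ρ (d (ζ s).1 (ζ s).2) ≤ C) (s : ℝ) :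
    ‖pertInput sat ρ d ω ζ A u₀ 1 s - pertInput sat ρ d ω ζ A u₀ (-1) s‖ ≤ C := by
  by_cases hs : s ∈ A
  · simp only [pertInput, hs, if_true]
    refine (hsat.norm_sub_le hU _ _).trans ?_
    rw [add_sub_add_left_eq_sub, ← sub_smul, norm_smul]
    have h1 : (1 * ρ (d (ζ s).1 (ζ s).2) - -1 * ρ (d (ζ s).1 (ζ s).2))
      = 2 * ρ (d (ζ s).1 (ζ s).2) := by ring
    rw [h1, Real.norm_of_nonneg (by linarith [hρ0 s])]
    nlinarith [hρ0 s, hω s, hρC s hs]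
  · simpa [pertInput, hs] using hC

lemma toReal_supDist_le {I : Type*} [NormedAddCommGroup I] {υ υ' : ℝ → I} {C : ℝ} (hC : 0 ≤ C)
    (h : ∀ s, ‖υ s - υ' s‖ ≤ C) : supDist υ υ' ≠ ⊤ ∧ (supDist υ υ').toReal ≤ C := by
  have h1 : supDist υ υ' ≤ ENNReal.ofReal C := by
    refine essSup_le_of_ae_le _ (Eventually.of_forall fun s => ?_)
    beta_reduce
    rw [← enorm_eq_nnnorm, ← ofReal_norm]
    exact ENNReal.ofReal_le_ofReal (h s)
  exact ⟨ne_top_of_le_ne_top ENNReal.ofReal_ne_top h1, ENNReal.toReal_le_of_le_ofReal hC h1⟩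

/-- The right-hand side of the perturbed doubled system. -/
def doubledField {E I : Type*} [AddCommGroup I] [Module ℝ I] (f : E → I → E) (sat : I → I)
    (ρ : ℝ → ℝ) (d : E → E → ℝ) : E × E → I × I → E × E :=
  fun z w => (f z.1 (sat (w.1 + ρ (d z.1 z.2) • w.2)), f z.2 (sat (w.1 - ρ (d z.1 z.2) • w.2)))

/-- The components of a solution of the doubled system solve the original system under the
perturbed inputs. -/
lemma SolvesOn.components {E I : Type*} [NormedAddCommGroup E] [NormedSpace ℝ E] [CompleteSpace E]
    [AddCommGroup I] [Module ℝ I] {f : E → I → E} {sat : I → I} {ρ : ℝ → ℝ} {d : E → E → ℝ}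
    {ω : ℝ → I × I} {ζ : ℝ → E × E} {t T : ℝ} (u₀ : I) (ht : 0 ≤ t) (htT : t ≤ T)
    (h : SolvesOn (doubledField f sat ρ d) ω ζ t) :
    SolvesOn f (pertInput sat ρ d ω ζ (Ico 0 T) u₀ 1) (fun s => (ζ s).1) t ∧
      SolvesOn f (pertInput sat ρ d ω ζ (Ico 0 T) u₀ (-1)) (fun s => (ζ s).2) t := by
  have hm : ∀ s ∈ Ioo 0 t, s ∈ Ico 0 T := fun s hs => ⟨hs.1.le, hs.2.trans_le htT⟩
  constructor
  · refine (SolvesOn.fst h).congr ht (fun _ _ => rfl) fun s hs => ?_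
    simp [pertInput, (hm s hs).1, (hm s hs).2]
  · refine (SolvesOn.snd h).congr ht (fun _ _ => rfl) fun s hs => ?_
    simp [pertInput, (hm s hs).1, (hm s hs).2, sub_eq_add_neg]

/-- Every trajectory of the doubled system is a genuine solution for all times: at a blow-up time a
component would blow up under an admissible input, contradicting `no_blowup`. -/
lemma solvesOn_doubled {n m : ℕ} {f : Euc n → Euc m → Euc n} {U : Set (Euc m)}
    (hsys : IsControlSystem f U) (hUcl : IsClosed U) (hU : Convex ℝ U) {d : Euc n → Euc n → ℝ}
    (hd : IsMetric d) (hsec : ∀ y : Euc n, Continuous fun x => d x y) {β : ℝ → ℝ → ℝ}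
    (hβ : IsClassKL β) {γ : ℝ → ℝ} (hγ : IsClassKInf γ) (hfc : ForwardComplete f U)
    (hiss : DeltaISSMaxWith f U d β γ) {ρ : ℝ → ℝ} (hρK : IsClassKInf ρ) {sat : Euc m → Euc m}
    (hsat : IsSat U sat) {ω : ℝ → Euc m × Euc m}
    (hω : AdmissibleDisturbance (U ×ˢ Metric.closedBall (0 : Euc m) 1) ω)
    {ζ : ℝ → Euc n × Euc n} (hζ : IsTrajectory (doubledField f sat ρ d) ω ζ) {t : ℝ}
    (ht : 0 ≤ t) : SolvesOn (doubledField f sat ρ d) ω ζ t := by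
  have hpair : ∀ {g h : ℝ → Euc n} {a b : ℝ}, IntervalIntegrable g volume a b →
      IntervalIntegrable h volume a b → IntervalIntegrable (fun s => (g s, h s)) volume a b :=
    fun hg hh => ⟨hg.1.prodMk hh.1, hg.2.prodMk hh.2⟩
  have h0 : ∀ a b, 0 ≤ a → a ≤ b →
      IntervalIntegrable (fun s => doubledField f sat ρ d (ζ 0) (ω s)) volume a b := by
    intro a b ha hab
    obtain ⟨C, hC⟩ := hω.2.2 (b + 1) (by linarith)
    set c := ρ (d (ζ 0).1 (ζ 0).2)
    have hC' : ∀ᵐ t ∂(volume.restrict (Icc (0:ℝ) b)), ‖ω t‖ ≤ C :=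
      ae_mono (Measure.restrict_mono (Icc_subset_Icc_right (by linarith)) le_rfl) hC
    have hsm : ∀ s, ‖c • (ω s).2‖ ≤ |c| := fun s => by
      have := mem_closedBall_zero_iff.1 (hω.2.1 s).2
      rw [norm_smul, Real.norm_eq_abs]
      exact mul_le_of_le_one_right (abs_nonneg c) this
    refine hpair ?_ ?_
    · refine intervalIntegrable_const_state hsys hUcl hU hsat _ (C := C + |c|)
        (hω.1.fst.add (hω.1.snd.const_smul c)) ha hab ?_
      filter_upwards [hC'] with s hs
      exact (norm_add_le _ _).trans (add_le_add ((norm_fst_le _).trans hs) (hsm s))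
    · refine intervalIntegrable_const_state hsys hUcl hU hsat _ (C := C + |c|)
        (hω.1.fst.sub (hω.1.snd.const_smul c)) ha hab ?_
      filter_upwards [hC'] with s hs
      exact (norm_sub_le _ _).trans (add_le_add ((norm_fst_le _).trans hs) (hsm s))
  rcases hζ.dichotomy h0 with h | ⟨T, hT, hsol, hn⟩
  · exact h t ht
  exfalso
  have hcont : ContinuousOn ζ (Ico 0 T) := by
    intro x hx
    obtain ⟨y, hxy, hyT⟩ := exists_between hx.2
    refine ((hsol y (hx.1.trans hxy.le) hyT).continuousOn (hx.1.trans hxy.le) x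
      ⟨hx.1, hxy.le⟩).mono_of_mem_nhdsWithin ?_
    filter_upwards [self_mem_nhdsWithin, mem_nhdsWithin_of_mem_nhds (Iio_mem_nhds hxy)] with s h1 h2
    exact ⟨h1.1, h2.le⟩
  have hadm := admissible_pertInput hU hsat hρK.1 hd hsec hω.1 measurableSet_Ico hcont
    (hsat 0).1
  have i1 := no_blowup hd hβ hγ hfc hiss (hadm 1) hT
    fun t h1 h2 => ((hsol t h1 h2).components (sat 0) h1 h2.le).1
  have i2 := no_blowup hd hβ hγ hfc hiss (hadm (-1)) hT
    fun t h1 h2 => ((hsol t h1 h2).components (sat 0) h1 h2.le).2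
  refine hn ((hpair i1 i2).congr_uIoo ?_)
  rw [uIoo_of_le hT.le]
  intro s hs
  simp [doubledField, pertInput, hs.1.le, hs.2, sub_eq_add_neg]

end Perturbation

/-! ### The small-gain argument -/

/-- Under the max-form `δ∃-ISS` estimate with `β`, `γ`, with
`α(r) = β(r,0) > r` for `r > 0`, and `ρ` a `K∞` function with
`ρ(r) ≤ (1/2)γ⁻¹(α⁻¹(r)/4)`, every trajectory `ζ` of the perturbed doubled system `Σ̂`
satisfies `d̂(ζ(t),Δ) ≤ max{β(d̂(z,Δ),t), d̂(z,Δ)/2}` for all `t ≥ 0`. -/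
theorem perturbed_doubled_system_max_estimate {n m : ℕ}
    (f : Euc n → Euc m → Euc n) (U : Set (Euc m)) (hsys : IsControlSystem f U)
    (hUcl : IsClosed U) (hUconv : Convex ℝ U)
    (d : Euc n → Euc n → ℝ) (hd : IsMetric d)
    (hsec : ∀ y : Euc n, Continuous fun x => d x y)
    (β : ℝ → ℝ → ℝ) (hβ : IsClassKL β) (γ : ℝ → ℝ) (hγ : IsClassKInf γ)
    (hfc : ForwardComplete f U) (hiss : DeltaISSMaxWith f U d β γ)
    (hα : ∀ r : ℝ, 0 < r → r < β r 0)
    (γinv αinv : ℝ → ℝ)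
    (hγinv : ∀ r : ℝ, 0 ≤ r → 0 ≤ γinv r ∧ γ (γinv r) = r)
    (hαinv : ∀ r : ℝ, 0 ≤ r → 0 ≤ αinv r ∧ β (αinv r) 0 = r)
    (ρ : ℝ → ℝ) (hρK : IsClassKInf ρ)
    (hρ : ∀ r : ℝ, 0 ≤ r → ρ r ≤ (1 / 2) * γinv (αinv r / 4))
    (sat : Euc m → Euc m) (hsat : IsSat U sat) :
    ∀ ω : ℝ → Euc m × Euc m,
      AdmissibleDisturbance (U ×ˢ Metric.closedBall (0 : Euc m) 1) ω →
      ∀ ζ : ℝ → Euc n × Euc n,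
        IsTrajectory
          (fun z w => (f z.1 (sat (w.1 + ρ (d z.1 z.2) • w.2)),
                       f z.2 (sat (w.1 - ρ (d z.1 z.2) • w.2)))) ω ζ →
        ∀ t : ℝ, 0 ≤ t →
          setDist (dHat d) (ζ t) (diagSet (Euc n)) ≤
            max (β (setDist (dHat d) (ζ 0) (diagSet (Euc n))) t)
              (setDist (dHat d) (ζ 0) (diagSet (Euc n)) / 2) := by
  intro ω hω ζ hζ t ht
  have hsol : ∀ t, 0 ≤ t → SolvesOn (doubledField f sat ρ d) ω ζ t := fun t ht =>
    solvesOn_doubled hsys hUcl hUconv hd hsec hβ hγ hfc hiss hρK hsat hω hζ ht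
  simp only [setDist_dHat_diagSet hd]
  set D : ℝ → ℝ := fun s => d (ζ s).1 (ζ s).2 with hD
  have hD0 : ∀ s, 0 ≤ D s := fun s => hd.1 _ _
  have hDcont : ∀ T, 0 ≤ T → ContinuousOn D (Icc 0 T) := fun T hT =>
    (hd.continuous_uncurry hsec).comp_continuousOn ((hsol T hT).continuousOn hT)
  change D t ≤ max (β (D 0) t) (D 0 / 2)
  have hρ0 : ∀ s, 0 ≤ ρ (D s) := fun s => by
    simpa [hρK.2.1] using
      hρK.2.2.1.monotoneOn (mem_Ici.mpr le_rfl) (mem_Ici.mpr (hD0 s)) (hD0 s)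
  -- As long as `D ≤ α(2q)`, the two inputs differ by at most `γ⁻¹(q/2)`.
  have step : ∀ q, 0 < q → ∀ t, 0 ≤ t → (∀ s ∈ Ico 0 t, D s ≤ β (2 * q) 0) →
      D t ≤ max (β (D 0) t) (q / 2) := by
    intro q hq t ht hle
    have hL0 : 0 ≤ β (2 * q) 0 := hβ.nonneg (by linarith) le_rfl
    have hαL : αinv (β (2 * q) 0) = 2 * q :=
      (hβ.2.1 0 le_rfl).2.2.1.injOn (mem_Ici.mpr (hαinv _ hL0).1)
        (mem_Ici.mpr (by linarith)) (hαinv _ hL0).2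
    obtain ⟨hC, hγC⟩ := hγinv (q / 2) (by linarith)
    have hρL : 2 * ρ (β (2 * q) 0) ≤ γinv (q / 2) := by
      have h := hρ _ hL0
      rw [hαL, show 2 * q / 4 = q / 2 by ring] at h
      linarith
    have hadm := admissible_pertInput hUconv hsat hρK.1 hd hsec hω.1 measurableSet_Ico
      (((hsol t ht).continuousOn ht).mono Ico_subset_Icc_self) (hsat 0).1
    -- switching both inputs to the same constant at time `t` does not affect the states at `t`
    have hsw : ∀ σ s, t ≤ s → pertInput sat ρ d ω ζ (Ico 0 t) (sat 0) σ s = sat 0 :=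
      fun σ s hs => by simp [pertInput, not_lt.mpr hs]
    obtain ⟨s1, s2⟩ := (hsol t ht).components (sat 0) ht le_rfl
    obtain ⟨c1, hc1, e1⟩ := exists_extension hd hβ hγ hfc hiss (hsat 0).1 ht (hsw 1) s1
    obtain ⟨c2, hc2, e2⟩ := exists_extension hd hβ hγ hfc hiss (hsat 0).1 ht (hsw (-1)) s2
    obtain ⟨hfin, hsup⟩ := toReal_supDist_le hC
      (norm_pertInput_sub_le (ρ := ρ) (d := d) (ω := ω) (ζ := ζ) (A := Ico 0 t) (u₀ := sat 0)
        hUconv hsat hC (fun s => mem_closedBall_zero_iff.1 (hω.2.1 s).2) hρ0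
        (fun s hs => (mul_le_mul_of_nonneg_left (hρK.2.2.1.monotoneOn (mem_Ici.mpr (hD0 s))
          (mem_Ici.mpr hL0) (hle s hs)) zero_le_two).trans hρL))
    have h := hiss _ _ (hadm 1) (hadm (-1)) hfin c1 c2 hc1 hc2 t ht
    rw [e1 t le_rfl, e2 t le_rfl, e1 0 ht, e2 0 ht] at h
    refine h.trans (max_le_max le_rfl ?_)
    rw [← hγC]
    exact hγ.2.2.1.monotoneOn (mem_Ici.mpr ENNReal.toReal_nonneg) (mem_Ici.mpr hC) hsup
  -- `D` never reaches the level `α(2q)`: look at the first time it would.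
  have key : ∀ q, 0 < q → D 0 ≤ q → D t ≤ max (β (D 0) t) (q / 2) := by
    intro q hq hDq
    refine step q hq t ht ?_
    by_contra hcon
    push Not at hcon
    obtain ⟨t1, ht1, hlt⟩ := hcon
    have hcl : IsClosed (Icc 0 t1 ∩ D ⁻¹' Ici (β (2 * q) 0)) :=
      (hDcont t1 ht1.1).preimage_isClosed_of_isClosed isClosed_Icc isClosed_Ici
    have hcp : IsCompact (Icc 0 t1 ∩ D ⁻¹' Ici (β (2 * q) 0)) :=
      isCompact_Icc.of_isClosed_subset hcl inter_subset_left
    obtain ⟨τ, ⟨hτ, hτL⟩, hmin⟩ := hcp.exists_isLeast ⟨t1, ⟨ht1.1, le_rfl⟩, hlt.le⟩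
    have hbefore : ∀ s ∈ Ico 0 τ, D s ≤ β (2 * q) 0 := by
      intro s hs
      by_contra hc
      exact absurd (hmin ⟨⟨hs.1, hs.2.le.trans hτ.2⟩, (not_le.mp hc).le⟩) (not_le.mpr hs.2)
    have h1 : D τ ≤ max (β (D 0) τ) (q / 2) := step q hq τ hτ.1 hbefore
    have h2 : β (D 0) τ < β (2 * q) 0 :=
      ((hβ.le_zero_time (hD0 0) hτ.1).trans (hβ.mono_left (hD0 0) hDq le_rfl)).trans_lt
        ((hβ.2.1 0 le_rfl).2.2.1 (mem_Ici.mpr hq.le) (mem_Ici.mpr (by linarith)) (by linarith))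
    have h3 : q / 2 < β (2 * q) 0 := by linarith [hα (2 * q) (by linarith)]
    exact absurd (hτL : β (2 * q) 0 ≤ D τ) (not_le.mpr (h1.trans_lt (max_lt h2 h3)))
  -- `q = D 0` is not available when `D 0 = 0`, so let `q` decrease to `D 0`.
  refine le_of_forall_pos_le_add fun ε hε => ?_
  refine (key (D 0 + ε) (by linarith [hD0 0]) (by linarith)).trans (max_le ?_ ?_)
  · linarith [le_max_left (β (D 0) t) (D 0 / 2)]
  · linarith [le_max_right (β (D 0) t) (D 0 / 2)]
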